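/- arXiv:2003.06049 — 11 statements merged into one kernel-verified Lean document; each statement's English description precedes it below -/
import Mathlib

section
/- Let A ∈ ℂ^{n×n}, B ∈ ℂ^{n×1}, S ∈ ℂ^{ν×ν}, L ∈ ℂ^{1×ν}, and let Π ∈ ℂ^{n×ν} satisfy the Sylvester equation AΠ + BL = ΠS. Let Q_P ∈ ℂ^{ℓ×ℓ}, R_P ∈ ℂ^{ℓ×1}, C_P ∈ ℂ^{1×n} and Υ_P ∈ ℂ^{ℓ×n} satisfy Q_P Υ_P = Υ_P A + R_P C_P and C_P Π = 0. If G ∈ ℂ^{ν×1} satisfies Υ_P Π G = Υ_P B, then (Υ_P Π)(S − G L) = Q_P (Υ_P Π). -/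
open Matrix

section Sylvester

variable {l m n o p R : Type*}

theorem mul_mul_eq_of_left_sylvester [NonUnitalSemiring R] [Fintype l] [Fintype n] [Fintype p]
    {A : Matrix n n R} {Q : Matrix l l R} {K : Matrix l p R} {C : Matrix p n R}
    {Υ : Matrix l n R} {P : Matrix n o R}
    (hΥ : Q * Υ = Υ * A + K * C) (hCP : C * P = 0) :
    Q * (Υ * P) = Υ * (A * P) :=
  calc
    Q * (Υ * P) = (Υ * A + K * C) * P := by rw [← Matrix.mul_assoc, hΥ]
    _ = Υ * (A * P) + K * (C * P) := by simp only [Matrix.add_mul, Matrix.mul_assoc]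
    _ = Υ * (A * P) := by rw [hCP, Matrix.mul_zero, add_zero]

theorem mul_mul_sub_eq_of_right_sylvester [NonUnitalRing R] [Fintype m] [Fintype n] [Fintype o]
    {A : Matrix n n R} {B : Matrix n m R} {S : Matrix o o R} {L : Matrix m o R}
    {P : Matrix n o R} {Υ : Matrix l n R} {G : Matrix o m R}
    (hP : A * P + B * L = P * S) (hG : Υ * P * G = Υ * B) :
    Υ * P * (S - G * L) = Υ * (A * P) :=
  calc
    Υ * P * (S - G * L) = Υ * (P * S) - Υ * P * G * L := by
      simp only [Matrix.mul_sub, Matrix.mul_assoc]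
    _ = Υ * (A * P + B * L) - Υ * B * L := by rw [hP, hG]
    _ = Υ * (A * P) := by rw [Matrix.mul_add, Matrix.mul_assoc Υ B L, add_sub_cancel_right]

theorem stmt_0_general [NonUnitalRing R]
    [Fintype l] [Fintype m] [Fintype n] [Fintype o] [Fintype p]
    {A : Matrix n n R} {B : Matrix n m R} {S : Matrix o o R} {L : Matrix m o R}
    {P : Matrix n o R} (hP : A * P + B * L = P * S)
    {Q : Matrix l l R} {K : Matrix l p R} {C : Matrix p n R} {Υ : Matrix l n R}
    (hΥ : Q * Υ = Υ * A + K * C) (hCP : C * P = 0)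
    {G : Matrix o m R} (hG : Υ * P * G = Υ * B) :
    Υ * P * (S - G * L) = Q * (Υ * P) :=
  (mul_mul_sub_eq_of_right_sylvester hP hG).trans (mul_mul_eq_of_left_sylvester hΥ hCP).symm

end Sylvester

/-- If `G` satisfies `Υp Π G = Υp B`, then `(Υp Π)(S − G L) = Qp (Υp Π)`. -/
theorem stmt_0 {n ν ℓ : ℕ}
    (A : Matrix (Fin n) (Fin n) ℂ) (B : Matrix (Fin n) (Fin 1) ℂ)
    (S : Matrix (Fin ν) (Fin ν) ℂ) (L : Matrix (Fin 1) (Fin ν) ℂ)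
    (Pm : Matrix (Fin n) (Fin ν) ℂ)
    (hPm : A * Pm + B * L = Pm * S)
    (Qp : Matrix (Fin ℓ) (Fin ℓ) ℂ) (Rp : Matrix (Fin ℓ) (Fin 1) ℂ)
    (Cp : Matrix (Fin 1) (Fin n) ℂ) (Υp : Matrix (Fin ℓ) (Fin n) ℂ)
    (hΥp : Qp * Υp = Υp * A + Rp * Cp)
    (hCp : Cp * Pm = 0)
    (G : Matrix (Fin ν) (Fin 1) ℂ)
    (hG : Υp * Pm * G = Υp * B) :
    (Υp * Pm) * (S - G * L) = Qp * (Υp * Pm) :=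
  stmt_0_general hPm hΥp hCp hG
end

section
/- Let A ∈ ℂ^{n×n}, B ∈ ℂ^{n×1}, S ∈ ℂ^{ν×ν}, L ∈ ℂ^{1×ν}, and let Π ∈ ℂ^{n×ν} satisfy AΠ + BL = ΠS. Let Q_P ∈ ℂ^{ℓ×ℓ}, R_P ∈ ℂ^{ℓ×1}, C_P ∈ ℂ^{1×n} and Υ_P ∈ ℂ^{ℓ×n} satisfy Q_P Υ_P = Υ_P A + R_P C_P and C_P Π = 0, and assume rank(Υ_P Π) = ℓ. If G ∈ ℂ^{ν×1} satisfies Υ_P Π G = Υ_P B, then every eigenvalue of Q_P is an eigenvalue of S − G L (i.e., σ(Q_P) ⊆ σ(S − GL)). -/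
open Matrix

/-!
The matrix `Υp * Pm` intertwines the reduced and the prescribed dynamics:
`Qp * (Υp * Pm) = (Υp * Pm) * (S - G * L)`. Full row rank makes it surjective, so `Qp` is the map
induced by `S - G * L` on a quotient, and its spectrum can only shrink: if `z - (S - G * L)` is
surjective, then so is `z - Qp`, and a surjective endomorphism of a finite module is invertible.
-/

section Spectrum

variable {R M N : Type*} [CommRing R] [AddCommGroup M] [Module R M] [AddCommGroup N] [Module R N]

theorem spectrum_subset_of_surjective_of_comp_eq [Module.Finite R N] {f : M →ₗ[R] N}
    {T : Module.End R M} {Q : Module.End R N} (hf : Function.Surjective f)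
    (hcomm : Q ∘ₗ f = f ∘ₗ T) : spectrum R Q ⊆ spectrum R T := by
  refine fun z hzQ hzT ↦ hzQ ?_
  have hcomm_sub : (algebraMap R _ z - Q) ∘ₗ f = f ∘ₗ (algebraMap R _ z - T) := by
    ext x
    simpa using congr($hcomm x)
  have hsurj : Function.Surjective (algebraMap R (Module.End R N) z - Q) := by
    refine .of_comp (g := f) ?_
    rw [← LinearMap.coe_comp, hcomm_sub, LinearMap.coe_comp]
    exact hf.comp ((Module.End.isUnit_iff _).mp hzT).surjective
  exact (Module.End.isUnit_iff _).mpr (OrzechProperty.bijective_of_surjective_endomorphism _ hsurj)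

theorem spectrum_subset_of_mulVec_surjective_of_mul_eq {m n : Type*} [Fintype m] [DecidableEq m]
    [Fintype n] [DecidableEq n] {P : Matrix m n R} {T : Matrix n n R} {Q : Matrix m m R}
    (hP : Function.Surjective P.mulVec) (hcomm : Q * P = P * T) :
    spectrum R Q ⊆ spectrum R T := by
  rw [← spectrum_toLin' Q, ← spectrum_toLin' T]
  exact spectrum_subset_of_surjective_of_comp_eq (f := toLin' P) hP
    (by rw [← toLin'_mul, ← toLin'_mul, hcomm])

end Spectrum

theorem mulVec_surjective_iff_rank_eq_card {m n K : Type*} [Fintype m] [Fintype n] [Field K]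
    {P : Matrix m n K} : Function.Surjective P.mulVec ↔ P.rank = Fintype.card m := by
  rw [← coe_mulVecLin, ← LinearMap.range_eq_top, Matrix.rank,
    ← Module.finrank_fintype_fun_eq_card K (η := m)]
  exact ⟨fun h ↦ by rw [h, finrank_top], Submodule.eq_top_of_finrank_eq⟩

section PolePlacement

variable {n m p ν ℓ R : Type*} [Fintype n] [Fintype m] [Fintype p] [Fintype ν] [Fintype ℓ]

theorem mul_mul_eq_mul_sub_mul_of_sylvester [NonUnitalRing R]
    {A : Matrix n n R} {B : Matrix n m R} {S : Matrix ν ν R} {L : Matrix m ν R}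
    {Pm : Matrix n ν R} (hPm : A * Pm + B * L = Pm * S)
    {Qp : Matrix ℓ ℓ R} {Rp : Matrix ℓ p R} {Cp : Matrix p n R} {Υp : Matrix ℓ n R}
    (hΥp : Qp * Υp = Υp * A + Rp * Cp) (hCp : Cp * Pm = 0)
    {G : Matrix ν m R} (hG : Υp * Pm * G = Υp * B) :
    Qp * (Υp * Pm) = Υp * Pm * (S - G * L) :=
  calc
    Qp * (Υp * Pm) = Υp * (A * Pm) + Rp * (Cp * Pm) := by
      rw [← Matrix.mul_assoc, hΥp, Matrix.add_mul, Matrix.mul_assoc, Matrix.mul_assoc]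
    _ = Υp * (Pm * S - B * L) := by
      rw [hCp, Matrix.mul_zero, add_zero, eq_sub_of_add_eq hPm]
    _ = Υp * Pm * S - Υp * Pm * G * L := by
      rw [hG, Matrix.mul_sub, Matrix.mul_assoc, Matrix.mul_assoc]
    _ = Υp * Pm * (S - G * L) := by
      rw [Matrix.mul_sub, Matrix.mul_assoc _ G]

theorem stmt_1_general [CommRing R] [DecidableEq ν] [DecidableEq ℓ]
    {A : Matrix n n R} {B : Matrix n m R} {S : Matrix ν ν R} {L : Matrix m ν R}
    {Pm : Matrix n ν R} (hPm : A * Pm + B * L = Pm * S)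
    {Qp : Matrix ℓ ℓ R} {Rp : Matrix ℓ p R} {Cp : Matrix p n R} {Υp : Matrix ℓ n R}
    (hΥp : Qp * Υp = Υp * A + Rp * Cp) (hCp : Cp * Pm = 0)
    (hsurj : Function.Surjective (Υp * Pm).mulVec)
    {G : Matrix ν m R} (hG : Υp * Pm * G = Υp * B) :
    spectrum R Qp ⊆ spectrum R (S - G * L) :=
  spectrum_subset_of_mulVec_surjective_of_mul_eq hsurj
    (mul_mul_eq_mul_sub_mul_of_sylvester hPm hΥp hCp hG)

end PolePlacement

/-- Pole placement: if `rank (Υp Π) = ℓ` and `Υp Π G = Υp B`, then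
`σ(Qp) ⊆ σ(S − G L)`. -/
theorem stmt_1 {n ν ℓ : ℕ}
    (A : Matrix (Fin n) (Fin n) ℂ) (B : Matrix (Fin n) (Fin 1) ℂ)
    (S : Matrix (Fin ν) (Fin ν) ℂ) (L : Matrix (Fin 1) (Fin ν) ℂ)
    (Pm : Matrix (Fin n) (Fin ν) ℂ)
    (hPm : A * Pm + B * L = Pm * S)
    (Qp : Matrix (Fin ℓ) (Fin ℓ) ℂ) (Rp : Matrix (Fin ℓ) (Fin 1) ℂ)
    (Cp : Matrix (Fin 1) (Fin n) ℂ) (Υp : Matrix (Fin ℓ) (Fin n) ℂ)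
    (hΥp : Qp * Υp = Υp * A + Rp * Cp)
    (hCp : Cp * Pm = 0)
    (hrank : (Υp * Pm).rank = ℓ)
    (G : Matrix (Fin ν) (Fin 1) ℂ)
    (hG : Υp * Pm * G = Υp * B) :
    spectrum ℂ Qp ⊆ spectrum ℂ (S - G * L) := by
  have hsurj : Function.Surjective (Υp * Pm).mulVec :=
    mulVec_surjective_iff_rank_eq_card.mpr (by rw [hrank, Fintype.card_fin])
  exact stmt_1_general hPm hΥp hCp hsurj hG
end

section
/- Let A ∈ ℂ^{n×n}, B ∈ ℂ^{n×1}, S ∈ ℂ^{ν×ν}, L ∈ ℂ^{1×ν}, and let Π ∈ ℂ^{n×ν} satisfy AΠ + BL = ΠS. Let Q_P ∈ ℂ^{ν×ν}, R_P ∈ ℂ^{ν×1}, C_P ∈ ℂ^{1×n} and Υ_P ∈ ℂ^{ν×n} satisfy Q_P Υ_P = Υ_P A + R_P C_P and C_P Π = 0, and assume Υ_P Π ∈ ℂ^{ν×ν} is invertible. If G = (Υ_P Π)^{-1} Υ_P B, then S − G L = (Υ_P Π)^{-1} Q_P (Υ_P Π); in particular S − GL is similar to Q_P. -/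
open Matrix

/-!
Premultiplying `A Π + B L = Π S` by `Υ` and using `Q Υ = Υ A + R C` together with `C Π = 0` shows
that `X = Υ Π` solves the Sylvester equation `Q X + (Υ B) L = X S`. When `X` is invertible,
multiplying this by `X⁻¹` gives `X⁻¹ Q X = S - X⁻¹ (Υ B) L`.
-/

section SylvesterEquation

variable {α m n p q ν : Type*} [Fintype m] [Fintype n] [Fintype p] [Fintype q]

theorem dual_sylvester_mul_right [NonUnitalSemiring α]
    {A : Matrix n n α} {Q : Matrix q q α} {R : Matrix q p α} {C : Matrix p n α}
    {Υ : Matrix q n α} {X : Matrix n ν α}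
    (hΥ : Q * Υ = Υ * A + R * C) (hC : C * X = 0) :
    Q * (Υ * X) = Υ * (A * X) := by
  rw [← Matrix.mul_assoc, hΥ, Matrix.add_mul, Matrix.mul_assoc R, hC, Matrix.mul_zero, add_zero,
    Matrix.mul_assoc]

variable [Fintype ν]

theorem sylvester_mul_left [NonUnitalSemiring α]
    {A : Matrix n n α} {B : Matrix n m α} {S : Matrix ν ν α} {L : Matrix m ν α}
    {Q : Matrix q q α} {R : Matrix q p α} {C : Matrix p n α}
    {Υ : Matrix q n α} {X : Matrix n ν α}
    (hX : A * X + B * L = X * S) (hΥ : Q * Υ = Υ * A + R * C) (hC : C * X = 0) :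
    Q * (Υ * X) + Υ * B * L = Υ * X * S := by
  calc Q * (Υ * X) + Υ * B * L
      = Υ * (A * X) + Υ * (B * L) := by
        rw [dual_sylvester_mul_right hΥ hC, Matrix.mul_assoc]
    _ = Υ * (X * S) := by rw [← Matrix.mul_add, hX]
    _ = Υ * X * S := (Matrix.mul_assoc _ _ _).symm

variable [CommRing α] [DecidableEq ν]

theorem sub_inv_mul_mul_eq_inv_mul_mul_of_sylvester
    {Q S X : Matrix ν ν α} {B : Matrix ν m α} {L : Matrix m ν α}
    (hX : IsUnit X) (h : Q * X + B * L = X * S) :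
    S - X⁻¹ * B * L = X⁻¹ * Q * X := by
  have hdet : IsUnit X.det := (isUnit_iff_isUnit_det X).mp hX
  calc S - X⁻¹ * B * L
      = X⁻¹ * (X * S - B * L) := by
        rw [Matrix.mul_sub, nonsing_inv_mul_cancel_left _ _ hdet, Matrix.mul_assoc]
    _ = X⁻¹ * (Q * X) := by rw [← h, add_sub_cancel_right]
    _ = X⁻¹ * Q * X := (Matrix.mul_assoc _ _ _).symm

theorem stmt_2_general
    {A : Matrix n n α} {B : Matrix n m α} {S : Matrix ν ν α} {L : Matrix m ν α}
    {Pm : Matrix n ν α} (hPm : A * Pm + B * L = Pm * S)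
    {Qp : Matrix ν ν α} {Rp : Matrix ν p α} {Cp : Matrix p n α} {Υp : Matrix ν n α}
    (hΥp : Qp * Υp = Υp * A + Rp * Cp) (hCp : Cp * Pm = 0) (hinv : IsUnit (Υp * Pm))
    {G : Matrix ν m α} (hG : G = (Υp * Pm)⁻¹ * (Υp * B)) :
    S - G * L = (Υp * Pm)⁻¹ * Qp * (Υp * Pm) := by
  have hsylvester : Qp * (Υp * Pm) + Υp * B * L = Υp * Pm * S := sylvester_mul_left hPm hΥp hCp
  rw [hG, sub_inv_mul_mul_eq_inv_mul_mul_of_sylvester hinv hsylvester]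

end SylvesterEquation

/-- Full pole assignment: if `Υp Π` is invertible and `G = (Υp Π)⁻¹ Υp B`, then
`S − G L = (Υp Π)⁻¹ Qp (Υp Π)`, i.e. `S − GL` is similar to `Qp`. -/
theorem stmt_2 {n ν : ℕ}
    (A : Matrix (Fin n) (Fin n) ℂ) (B : Matrix (Fin n) (Fin 1) ℂ)
    (S : Matrix (Fin ν) (Fin ν) ℂ) (L : Matrix (Fin 1) (Fin ν) ℂ)
    (Pm : Matrix (Fin n) (Fin ν) ℂ)
    (hPm : A * Pm + B * L = Pm * S)
    (Qp : Matrix (Fin ν) (Fin ν) ℂ) (Rp : Matrix (Fin ν) (Fin 1) ℂ)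
    (Cp : Matrix (Fin 1) (Fin n) ℂ) (Υp : Matrix (Fin ν) (Fin n) ℂ)
    (hΥp : Qp * Υp = Υp * A + Rp * Cp)
    (hCp : Cp * Pm = 0)
    (hinv : IsUnit (Υp * Pm))
    (G : Matrix (Fin ν) (Fin 1) ℂ)
    (hG : G = (Υp * Pm)⁻¹ * (Υp * B)) :
    S - G * L = (Υp * Pm)⁻¹ * Qp * (Υp * Pm) :=
  stmt_2_general hPm hΥp hCp hinv hG
end

section
/- Let A ∈ ℂ^{n×n}, B ∈ ℂ^{n×1}, C ∈ ℂ^{1×n}, S ∈ ℂ^{ν×ν}, L ∈ ℂ^{1×ν} with L ≠ 0, S_D ∈ ℂ^{μ×μ}, R ∈ ℂ^{μ×1}, and G ∈ ℂ^{ν×1}. Let Π ∈ ℂ^{n×ν} satisfy AΠ + BL = ΠS and let Υ_D ∈ ℂ^{μ×n} satisfy S_D Υ_D = Υ_D A + R C. Then the matrix P = Υ_D Π satisfies the reduced-order Sylvester equation S_D P = P(S − GL) + R(CΠ) if and only if Υ_D Π G = Υ_D B. -/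
open Matrix

/-!
The product `P = Υ Π` of two Sylvester solutions is itself almost one: sandwiching `A` between
`Υ` and `Π` and evaluating `Υ A Π` with either equation gives `S_D P + Υ B L = P S + R C Π`.
Comparing this with the reduced equation, where `P S` is replaced by `P (S - G L)`, leaves exactly
`P G L = Υ B L`, and `L` cancels on the right because its rows are linearly independent.
-/

section RightCancellation

variable {m n α : Type*}

theorem linearIndependent_row_of_ne_zero [Subsingleton m] [Ring α] [IsDomain α]
    {L : Matrix m n α} (hL : L ≠ 0) : LinearIndependent α L.row := by
  obtain ⟨i, hi⟩ : ∃ i, L.row i ≠ 0 := Function.ne_iff.mp hL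
  exact .of_subsingleton i hi

theorem mul_left_inj_of_linearIndependent_row {l : Type*} [Fintype m] [Semiring α]
    {L : Matrix m n α} (hL : LinearIndependent α L.row) {X Y : Matrix l m α} :
    X * L = Y * L ↔ X = Y := by
  refine ⟨fun h ↦ ext_row fun i ↦ vecMul_injective_iff.mpr hL ?_, congrArg (· * L)⟩
  exact congrArg (row · i) h

end RightCancellation

section Sylvester

variable {n ν μ m p α : Type*} [Fintype n] [Fintype ν] [Fintype μ] [Fintype m] [Fintype p]
  {A : Matrix n n α} {B : Matrix n m α} {C : Matrix p n α}
  {S : Matrix ν ν α} {L : Matrix m ν α} {SD : Matrix μ μ α} {R : Matrix μ p α}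
  {Pm : Matrix n ν α} {Υ : Matrix μ n α}

theorem sylvester_mul_add [NonUnitalSemiring α]
    (hPm : A * Pm + B * L = Pm * S) (hΥ : SD * Υ = Υ * A + R * C) :
    SD * (Υ * Pm) + Υ * B * L = Υ * Pm * S + R * (C * Pm) :=
  calc
    SD * (Υ * Pm) + Υ * B * L = (Υ * A + R * C) * Pm + Υ * B * L := by
      rw [← hΥ, Matrix.mul_assoc SD]
    _ = Υ * (A * Pm + B * L) + R * (C * Pm) := by
      simp only [Matrix.add_mul, Matrix.mul_add, Matrix.mul_assoc]
      abel
    _ = Υ * Pm * S + R * (C * Pm) := by rw [hPm, Matrix.mul_assoc]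

theorem reduced_sylvester_iff_mul_eq_mul [NonUnitalRing α]
    (hPm : A * Pm + B * L = Pm * S) (hΥ : SD * Υ = Υ * A + R * C) (G : Matrix ν m α) :
    SD * (Υ * Pm) = Υ * Pm * (S - G * L) + R * (C * Pm) ↔
      Υ * Pm * G * L = Υ * B * L := by
  have reduced_rhs : Υ * Pm * (S - G * L) + R * (C * Pm) =
      SD * (Υ * Pm) + Υ * B * L - Υ * Pm * G * L := by
    rw [sylvester_mul_add hPm hΥ, Matrix.mul_sub, ← Matrix.mul_assoc (Υ * Pm) G L]
    abel
  rw [reduced_rhs, eq_sub_iff_add_eq, add_right_inj]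

end Sylvester

theorem stmt_6_general {n ν μ m p α : Type*} [Fintype n] [Fintype ν] [Fintype μ] [Fintype m]
    [Fintype p] [Ring α]
    (A : Matrix n n α) (B : Matrix n m α) (C : Matrix p n α)
    (S : Matrix ν ν α) (L : Matrix m ν α) (hL : LinearIndependent α L.row)
    (SD : Matrix μ μ α) (R : Matrix μ p α) (G : Matrix ν m α)
    (Pm : Matrix n ν α) (hPm : A * Pm + B * L = Pm * S)
    (Υd : Matrix μ n α) (hΥd : SD * Υd = Υd * A + R * C) :
    SD * (Υd * Pm) = (Υd * Pm) * (S - G * L) + R * (C * Pm)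
      ↔ Υd * Pm * G = Υd * B :=
  (reduced_sylvester_iff_mul_eq_mul hPm hΥd G).trans (mul_left_inj_of_linearIndependent_row hL)

/-- `P = Υd Π` satisfies the reduced-order Sylvester equation
`S_D P = P(S − GL) + R(CΠ)` iff `Υd Π G = Υd B`. -/
theorem stmt_6 {n ν μ : ℕ}
    (A : Matrix (Fin n) (Fin n) ℂ) (B : Matrix (Fin n) (Fin 1) ℂ)
    (C : Matrix (Fin 1) (Fin n) ℂ)
    (S : Matrix (Fin ν) (Fin ν) ℂ) (L : Matrix (Fin 1) (Fin ν) ℂ)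
    (hL : L ≠ 0)
    (SD : Matrix (Fin μ) (Fin μ) ℂ) (R : Matrix (Fin μ) (Fin 1) ℂ)
    (G : Matrix (Fin ν) (Fin 1) ℂ)
    (Pm : Matrix (Fin n) (Fin ν) ℂ)
    (hPm : A * Pm + B * L = Pm * S)
    (Υd : Matrix (Fin μ) (Fin n) ℂ)
    (hΥd : SD * Υd = Υd * A + R * C) :
    SD * (Υd * Pm) = (Υd * Pm) * (S - G * L) + R * (C * Pm)
      ↔ Υd * Pm * G = Υd * B :=
  stmt_6_general A B C S L (linearIndependent_row_of_ne_zero hL) SD R G Pm hPm Υd hΥd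
end

section
/- Let A ∈ ℂ^{n×n}, B ∈ ℂ^{n×1}, C ∈ ℂ^{1×n}, let s_1, …, s_ν ∈ ℂ be pairwise distinct and not eigenvalues of A, let S = diag(s_1, …, s_ν), L = [1 ⋯ 1] ∈ ℂ^{1×ν}, and let Π ∈ ℂ^{n×ν} be the matrix whose j-th column is (s_j I − A)^{-1}B. Let G ∈ ℂ^{ν×1} and let I_D ⊆ {1, …, ν} be a set of indices such that s_i I − S + GL is invertible for every i ∈ I_D. Then C(s_i I − A)^{-1} Π G = C(s_i I − A)^{-1} B holds for all i ∈ I_D if and only if CΠ(s_i I − S + GL)^{-2} G = C(s_i I − A)^{-2} B holds for all i ∈ I_D. -/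
open Matrix

/-!
Write `P` for `Π`, `T = σI − A`, `N = σI − S` and `M = N + GL`. The Sylvester equation
`TP = PN + BL` gives `TP − PM = (B − PG)L`, hence the resolvent identity
`PM⁻¹ − T⁻¹P = T⁻¹(B − PG)LM⁻¹`. If `e` satisfies `Ne = 0` and `Le = 1`, then `M⁻¹G = e` and
`Pe = T⁻¹B`, so evaluating the identity at `e` expresses the first-order moment error as
`PM⁻²G − T⁻²B = T⁻¹(B − PG) · LM⁻¹e`. A left null vector `f` of `N` with `fe = 1` shows that the
factor `LM⁻¹e` is invertible, with inverse `fG`, so it can be cancelled. For `S = diag(s)` and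
`σ = sᵢ`, both `e` and `f` are the `i`-th unit vector.
-/

namespace MomentMatching

variable {R n ν m q : Type*} [CommRing R] [Fintype n] [DecidableEq n] [Fintype ν]

section DiagonalInterpolation

variable [DecidableEq ν]

lemma sylvester_diagonal_of_resolvent_columns {A : Matrix n n R} {s : ν → R} {P Q : Matrix n ν R}
    (hA : ∀ j, IsUnit (s j • (1 : Matrix n n R) - A))
    (hP : ∀ i j, P i j = ((s j • (1 : Matrix n n R) - A)⁻¹ * Q) i j) :
    A * P + Q = P * diagonal s := by
  ext i j
  have column_eq : ((s j • (1 : Matrix n n R) - A) * P) i j = Q i j := by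
    rw [← mul_nonsing_inv_cancel_left _ Q ((isUnit_iff_isUnit_det _).1 (hA j)),
      mul_apply, mul_apply]
    exact Finset.sum_congr rfl fun k _ => by rw [hP k j]
  rw [Matrix.sub_mul, Matrix.smul_mul, Matrix.one_mul, Matrix.sub_apply,
    Matrix.smul_apply, smul_eq_mul] at column_eq
  rw [Matrix.add_apply, mul_diagonal]
  linear_combination -column_eq

lemma shifted_sylvester {A : Matrix n n R} {S : Matrix ν ν R} {P Q : Matrix n ν R}
    (h : A * P + Q = P * S) (σ : R) :
    (σ • (1 : Matrix n n R) - A) * P = P * (σ • (1 : Matrix ν ν R) - S) + Q := by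
  rw [Matrix.sub_mul, Matrix.mul_sub, ← h, Matrix.smul_mul, Matrix.mul_smul, Matrix.one_mul,
    Matrix.mul_one]
  abel

lemma shifted_diagonal_mul_single [DecidableEq m] (s : ν → R) (i : ν) (k : m) (r : R) :
    (s i • (1 : Matrix ν ν R) - diagonal s) * single i k r = 0 := by
  ext a b
  rw [smul_one_eq_diagonal, diagonal_sub, diagonal_mul]
  obtain rfl | hia := eq_or_ne i a <;> simp [*]

lemma single_mul_shifted_diagonal [DecidableEq m] (s : ν → R) (i : ν) (k : m) (r : R) :
    single k i r * (s i • (1 : Matrix ν ν R) - diagonal s) = 0 := by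
  ext a b
  rw [smul_one_eq_diagonal, diagonal_sub, mul_diagonal]
  obtain rfl | hib := eq_or_ne i b <;> simp [*]

end DiagonalInterpolation

section FirstMoment

variable [Fintype m] {T : Matrix n n R} {N : Matrix ν ν R} {P : Matrix n ν R} {B : Matrix n m R}
  {L : Matrix m ν R} {G e : Matrix ν m R} {f : Matrix m ν R}

lemma mul_eq_inv_mul_of_sylvester [DecidableEq m] (hT : IsUnit T) (hP : T * P = P * N + B * L)
    (hNe : N * e = 0) (hLe : L * e = 1) : P * e = T⁻¹ * B := by
  have hTPe : T * (P * e) = B := by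
    rw [← Matrix.mul_assoc, hP, Matrix.add_mul, Matrix.mul_assoc, Matrix.mul_assoc, hNe, hLe,
      Matrix.mul_zero, zero_add, Matrix.mul_one]
  rw [← hTPe, nonsing_inv_mul_cancel_left _ _ ((isUnit_iff_isUnit_det _).1 hT)]

lemma mul_inv_sub_inv_mul_of_sylvester [DecidableEq ν] (hT : IsUnit T)
    (hM : IsUnit (N + G * L)) (hP : T * P = P * N + B * L) :
    P * (N + G * L)⁻¹ - T⁻¹ * P = T⁻¹ * (B - P * G) * L * (N + G * L)⁻¹ := by
  have hdefect : T * P - P * (N + G * L) = (B - P * G) * L := by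
    rw [hP, Matrix.mul_add, Matrix.sub_mul, Matrix.mul_assoc]
    abel
  calc P * (N + G * L)⁻¹ - T⁻¹ * P
      = T⁻¹ * (T * P - P * (N + G * L)) * (N + G * L)⁻¹ := by
        rw [Matrix.mul_sub, Matrix.sub_mul, ← Matrix.mul_assoc T⁻¹ P,
          nonsing_inv_mul_cancel_left _ _ ((isUnit_iff_isUnit_det _).1 hT),
          mul_nonsing_inv_cancel_right _ _ ((isUnit_iff_isUnit_det _).1 hM)]
    _ = T⁻¹ * (B - P * G) * L * (N + G * L)⁻¹ := by
        rw [hdefect, Matrix.mul_assoc T⁻¹ (B - P * G) L]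

variable [DecidableEq ν] [DecidableEq m]

lemma inv_add_mul_mul_eq_of_mul_eq_zero (hM : IsUnit (N + G * L)) (hNe : N * e = 0)
    (hLe : L * e = 1) :
    (N + G * L)⁻¹ * G = e := by
  have hMe : (N + G * L) * e = G := by
    rw [Matrix.add_mul, hNe, zero_add, Matrix.mul_assoc, hLe, Matrix.mul_one]
  calc (N + G * L)⁻¹ * G = (N + G * L)⁻¹ * ((N + G * L) * e) := by rw [hMe]
    _ = e := nonsing_inv_mul_cancel_left _ _ ((isUnit_iff_isUnit_det _).1 hM)

lemma first_moment_error (hT : IsUnit T) (hM : IsUnit (N + G * L))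
    (hP : T * P = P * N + B * L) (hNe : N * e = 0) (hLe : L * e = 1) :
    P * ((N + G * L)⁻¹ * (N + G * L)⁻¹) * G - T⁻¹ * T⁻¹ * B
      = T⁻¹ * (B - P * G) * (L * (N + G * L)⁻¹ * e) := by
  calc P * ((N + G * L)⁻¹ * (N + G * L)⁻¹) * G - T⁻¹ * T⁻¹ * B
      = (P * (N + G * L)⁻¹ - T⁻¹ * P) * e := by
        rw [Matrix.sub_mul, Matrix.mul_assoc T⁻¹ P,
          mul_eq_inv_mul_of_sylvester hT hP hNe hLe, ← Matrix.mul_assoc P, Matrix.mul_assoc _ _ G,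
          inv_add_mul_mul_eq_of_mul_eq_zero hM hNe hLe, Matrix.mul_assoc T⁻¹ T⁻¹]
    _ = T⁻¹ * (B - P * G) * (L * (N + G * L)⁻¹ * e) := by
        rw [mul_inv_sub_inv_mul_of_sylvester hT hM hP]
        simp only [Matrix.mul_assoc]

lemma mul_mul_inv_add_mul_eq_one_of_mul_eq_zero (hM : IsUnit (N + G * L)) (hfN : f * N = 0)
    (hfe : f * e = 1) :
    f * G * (L * (N + G * L)⁻¹ * e) = 1 := by
  have hfM : f * (N + G * L) = f * G * L := by
    rw [Matrix.mul_add, hfN, zero_add, Matrix.mul_assoc]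
  calc f * G * (L * (N + G * L)⁻¹ * e) = f * (N + G * L) * (N + G * L)⁻¹ * e := by
        rw [hfM]
        simp only [Matrix.mul_assoc]
    _ = 1 := by rw [mul_nonsing_inv_cancel_right _ _ ((isUnit_iff_isUnit_det _).1 hM), hfe]

theorem input_matching_iff_first_moment_matching (C : Matrix q n R)
    (hT : IsUnit T) (hM : IsUnit (N + G * L)) (hP : T * P = P * N + B * L)
    (hNe : N * e = 0) (hLe : L * e = 1) (hfN : f * N = 0) (hfe : f * e = 1) :
    C * T⁻¹ * P * G = C * T⁻¹ * B ↔
      C * P * ((N + G * L)⁻¹ * (N + G * L)⁻¹) * G = C * (T⁻¹ * T⁻¹) * B := by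
  have herror : C * P * ((N + G * L)⁻¹ * (N + G * L)⁻¹) * G - C * (T⁻¹ * T⁻¹) * B
      = (C * T⁻¹ * B - C * T⁻¹ * P * G) * (L * (N + G * L)⁻¹ * e) := by
    simpa only [Matrix.mul_sub, Matrix.sub_mul, Matrix.mul_assoc] using
      congrArg (C * ·) (first_moment_error hT hM hP hNe hLe)
  let _ : Invertible (L * (N + G * L)⁻¹ * e) :=
    invertibleOfLeftInverse _ _ (mul_mul_inv_add_mul_eq_one_of_mul_eq_zero hM hfN hfe)
  rw [← sub_eq_zero (a := C * P * _ * G), herror, eq_comm, ← sub_eq_zero,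
    ← Matrix.mul_left_inj_of_invertible (L * (N + G * L)⁻¹ * e), Matrix.zero_mul]

end FirstMoment

end MomentMatching

open MomentMatching in
theorem stmt_7_general {R n ν q : Type*} [CommRing R]
    [Fintype n] [DecidableEq n] [Fintype ν] [DecidableEq ν]
    (A : Matrix n n R) (B : Matrix n (Fin 1) R) (C : Matrix q n R) (s : ν → R)
    (hA : ∀ j, IsUnit (s j • (1 : Matrix n n R) - A)) (P : Matrix n ν R)
    (hP : ∀ i j, P i j = ((s j • (1 : Matrix n n R) - A)⁻¹ * B) i 0)
    (G : Matrix ν (Fin 1) R) (ID : Set ν)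
    (hinv : ∀ i ∈ ID, IsUnit (s i • (1 : Matrix ν ν R) - diagonal s
        + G * of fun (_ : Fin 1) (_ : ν) => (1 : R))) :
    (∀ i ∈ ID, C * (s i • (1 : Matrix n n R) - A)⁻¹ * P * G
        = C * (s i • (1 : Matrix n n R) - A)⁻¹ * B)
    ↔ (∀ i ∈ ID,
        C * P * ((s i • (1 : Matrix ν ν R) - diagonal s
              + G * of fun (_ : Fin 1) (_ : ν) => (1 : R))⁻¹
            * (s i • (1 : Matrix ν ν R) - diagonal s
              + G * of fun (_ : Fin 1) (_ : ν) => (1 : R))⁻¹) * G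
          = C * ((s i • (1 : Matrix n n R) - A)⁻¹ * (s i • (1 : Matrix n n R) - A)⁻¹) * B) := by
  have sylvester : A * P + B * of (fun (_ : Fin 1) (_ : ν) => (1 : R)) = P * diagonal s :=
    sylvester_diagonal_of_resolvent_columns hA fun i j => by
      rw [hP, ← Matrix.mul_assoc, mul_apply (N := of _)]
      simp
  refine forall₂_congr fun i hi => ?_
  refine input_matching_iff_first_moment_matching
    (e := single i 0 1) (f := single 0 i 1) C (hA i) (hinv i hi)
    (shifted_sylvester sylvester (s i)) (shifted_diagonal_mul_single s i 0 1) ?_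
    (single_mul_shifted_diagonal s i 0 1) ?_
  all_goals
    ext a b
    fin_cases a; fin_cases b
    simp

/-- The linear constraint `C(sᵢI − A)⁻¹ Π G = C(sᵢI − A)⁻¹ B` for all `i ∈ I_D`
is equivalent to the first-order (derivative) moment matching condition
`CΠ(sᵢI − S + GL)⁻² G = C(sᵢI − A)⁻² B` for all `i ∈ I_D`,
where `S = diag(s₁,…,s_ν)` and `L = [1 ⋯ 1]`. -/
theorem stmt_7 {n ν : ℕ}
    (A : Matrix (Fin n) (Fin n) ℂ) (B : Matrix (Fin n) (Fin 1) ℂ)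
    (C : Matrix (Fin 1) (Fin n) ℂ)
    (s : Fin ν → ℂ) (hdist : Function.Injective s)
    (hA : ∀ j, IsUnit (s j • (1 : Matrix (Fin n) (Fin n) ℂ) - A))
    (Pm : Matrix (Fin n) (Fin ν) ℂ)
    (hPm : ∀ i j, Pm i j = ((s j • (1 : Matrix (Fin n) (Fin n) ℂ) - A)⁻¹ * B) i 0)
    (G : Matrix (Fin ν) (Fin 1) ℂ)
    (ID : Set (Fin ν))
    (hinv : ∀ i ∈ ID, IsUnit (s i • (1 : Matrix (Fin ν) (Fin ν) ℂ)
        - Matrix.diagonal s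
        + G * (Matrix.of fun (_ : Fin 1) (_ : Fin ν) => (1 : ℂ)))) :
    (∀ i ∈ ID, C * (s i • (1 : Matrix (Fin n) (Fin n) ℂ) - A)⁻¹ * Pm * G
        = C * (s i • (1 : Matrix (Fin n) (Fin n) ℂ) - A)⁻¹ * B)
    ↔ (∀ i ∈ ID,
        C * Pm * ((s i • (1 : Matrix (Fin ν) (Fin ν) ℂ) - Matrix.diagonal s
              + G * (Matrix.of fun (_ : Fin 1) (_ : Fin ν) => (1 : ℂ)))⁻¹
            * (s i • (1 : Matrix (Fin ν) (Fin ν) ℂ) - Matrix.diagonal s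
              + G * (Matrix.of fun (_ : Fin 1) (_ : Fin ν) => (1 : ℂ)))⁻¹) * G
          = C * ((s i • (1 : Matrix (Fin n) (Fin n) ℂ) - A)⁻¹
              * (s i • (1 : Matrix (Fin n) (Fin n) ℂ) - A)⁻¹) * B) :=
  stmt_7_general A B C s hA Pm hPm G ID hinv
end

section
/- Let A ∈ ℂ^{n×n}, B ∈ ℂ^{n×1}, C ∈ ℂ^{1×n}, and let q_1, …, q_ν, s_1, …, s_ν ∈ ℂ, none of which is an eigenvalue of A. Let Υ ∈ ℂ^{ν×n} be the matrix whose i-th row is C(q_i I − A)^{-1} and Π ∈ ℂ^{n×ν} the matrix whose j-th column is (s_j I − A)^{-1}B. Define 𝕃 ∈ ℂ^{ν×ν} entrywise by 𝕃_{ij} = (K(q_i) − K(s_j))/(q_i − s_j) whenever q_i ≠ s_j, and 𝕃_{ij} = −C(s_j I − A)^{-2}B (which equals K'(s_j)) whenever q_i = s_j, with K(s) = C(sI − A)^{-1}B. Then 𝕃 = −ΥΠ. -/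
open Matrix

/-!
Both the difference quotients of the transfer function `z ↦ C (zI - A)⁻¹ B` and its derivative
factor through the resolvent: the first resolvent identity `R(z) - R(w) = (w - z) R(z) R(w)` turns
`(K(z) - K(w)) / (z - w)` into `-C R(z) R(w) B`, which at `z = w` is the value `K'(w)`. Its left
factor depends only on `z` and its right factor only on `w`, hence the factorization of the Loewner
matrix.
-/

theorem mem_resolventSet_iff_isUnit_smul_one_sub {R S : Type*} [CommRing R] [Ring S] [Algebra R S]
    {a : S} {z : R} : z ∈ resolventSet R a ↔ IsUnit (z • (1 : S) - a) := by
  rw [spectrum.mem_resolventSet_iff, Algebra.algebraMap_eq_smul_one]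

theorem resolvent_eq_smul_one_sub_inv {R n : Type*} [CommRing R] [Fintype n] [DecidableEq n]
    (A : Matrix n n R) (z : R) : resolvent A z = (z • (1 : Matrix n n R) - A)⁻¹ := by
  rw [resolvent, nonsing_inv_eq_ringInverse, Algebra.algebraMap_eq_smul_one]

theorem resolvent_sub_resolvent_eq_smul_mul {R S : Type*} [CommRing R] [Ring S] [Algebra R S]
    {a : S} {z w : R} (hz : z ∈ resolventSet R a) (hw : w ∈ resolventSet R a) :
    resolvent a z - resolvent a w = (w - z) • (resolvent a z * resolvent a w) := by
  have shift_sub_shift :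
      (algebraMap R S w - a) - (algebraMap R S z - a) = algebraMap R S (w - z) := by
    rw [sub_sub_sub_cancel_right, map_sub]
  rw [resolvent, resolvent, Ring.inverse_sub_inverse (iff_of_true hz hw), shift_sub_shift,
    Algebra.right_comm, ← Algebra.commutes, ← Algebra.smul_def]

namespace LinearSystem

variable {R 𝕜 n m p ι κ : Type*} [CommRing R] [Field 𝕜] [Fintype n] [DecidableEq n]

/-- The transfer function `K(z) = C (zI - A)⁻¹ B` of the linear system `ẋ = A x + B u`, `y = C x`
with `m` inputs and `p` outputs. -/
noncomputable def transferFunction (A : Matrix n n R) (B : Matrix n m R) (C : Matrix p n R)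
    (z : R) : Matrix p m R :=
  C * resolvent A z * B

/-- The first divided difference of the transfer function at `z` and `w`. On the diagonal it is the
derivative `K'(w)`, written as `-C (wI - A)⁻² B` so that it makes sense over every field. -/
noncomputable def transferSlope [DecidableEq 𝕜] (A : Matrix n n 𝕜) (B : Matrix n m 𝕜)
    (C : Matrix p n 𝕜) (z w : 𝕜) : Matrix p m 𝕜 :=
  if z = w then -(C * (resolvent A w * resolvent A w) * B)
  else (z - w)⁻¹ • (transferFunction A B C z - transferFunction A B C w)

theorem transferSlope_eq_neg_mul [DecidableEq 𝕜] {A : Matrix n n 𝕜} (B : Matrix n m 𝕜)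
    (C : Matrix p n 𝕜) {z w : 𝕜} (hz : z ∈ resolventSet 𝕜 A) (hw : w ∈ resolventSet 𝕜 A) :
    transferSlope A B C z w = -(C * resolvent A z * (resolvent A w * B)) := by
  rcases eq_or_ne z w with rfl | hzw
  · simp only [transferSlope, if_true, Matrix.mul_assoc]
  · have transferFunction_sub : transferFunction A B C z - transferFunction A B C w =
        (w - z) • (C * resolvent A z * (resolvent A w * B)) := by
      rw [transferFunction, transferFunction, ← Matrix.sub_mul, ← Matrix.mul_sub,
        resolvent_sub_resolvent_eq_smul_mul hz hw, Matrix.mul_smul, Matrix.smul_mul]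
      simp only [Matrix.mul_assoc]
    rw [transferSlope, if_neg hzw, transferFunction_sub, ← neg_sub z w, neg_smul, smul_neg,
      inv_smul_smul₀ (sub_ne_zero.mpr hzw)]

/-- The tangential generalized observability matrix, with `i`-th row `ℓᵢᵀ C (qᵢI - A)⁻¹`. -/
noncomputable def observabilityMatrix [Fintype p] (A : Matrix n n R) (C : Matrix p n R)
    (ℓ : ι → p → R) (q : ι → R) : Matrix ι n R :=
  .of fun i => ℓ i ᵥ* (C * resolvent A (q i))

/-- The tangential generalized controllability matrix, with `j`-th column `(sⱼI - A)⁻¹ B rⱼ`. -/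
noncomputable def controllabilityMatrix [Fintype m] (A : Matrix n n R) (B : Matrix n m R)
    (r : κ → m → R) (s : κ → R) : Matrix n κ R :=
  .of fun k j => ((resolvent A (s j) * B) *ᵥ r j) k

/-- The Loewner matrix of tangential interpolation data: row `i` samples the transfer function at
`qᵢ` along the left direction `ℓᵢ`, column `j` at `sⱼ` along the right direction `rⱼ`. For a
single-input single-output system with all directions equal to `1` it is the classical Loewner
matrix. -/
noncomputable def loewnerMatrix [DecidableEq 𝕜] [Fintype m] [Fintype p] (A : Matrix n n 𝕜)
    (B : Matrix n m 𝕜) (C : Matrix p n 𝕜) (ℓ : ι → p → 𝕜) (r : κ → m → 𝕜) (q : ι → 𝕜)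
    (s : κ → 𝕜) : Matrix ι κ 𝕜 :=
  .of fun i j => ℓ i ⬝ᵥ (transferSlope A B C (q i) (s j) *ᵥ r j)

theorem observabilityMatrix_one_apply [Fintype p] [Unique p] (A : Matrix n n R)
    (C : Matrix p n R) (q : ι → R) (i : ι) (k : n) :
    observabilityMatrix A C 1 q i k = (C * (q i • (1 : Matrix n n R) - A)⁻¹) default k := by
  simp [observabilityMatrix, resolvent_eq_smul_one_sub_inv, vecMul, dotProduct]

theorem controllabilityMatrix_one_apply [Fintype m] [Unique m] (A : Matrix n n R)
    (B : Matrix n m R) (s : κ → R) (k : n) (j : κ) :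
    controllabilityMatrix A B 1 s k j = ((s j • (1 : Matrix n n R) - A)⁻¹ * B) k default := by
  simp [controllabilityMatrix, resolvent_eq_smul_one_sub_inv, mulVec, dotProduct]

theorem loewnerMatrix_one_apply [DecidableEq 𝕜] [Fintype m] [Unique m] [Fintype p] [Unique p]
    (A : Matrix n n 𝕜) (B : Matrix n m 𝕜) (C : Matrix p n 𝕜) (q : ι → 𝕜) (s : κ → 𝕜)
    (i : ι) (j : κ) :
    loewnerMatrix A B C 1 1 q s i j =
      if q i = s j then
        (-(C * ((s j • (1 : Matrix n n 𝕜) - A)⁻¹ * (s j • (1 : Matrix n n 𝕜) - A)⁻¹) * B))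
          default default
      else
        ((C * (q i • (1 : Matrix n n 𝕜) - A)⁻¹ * B) default default
          - (C * (s j • (1 : Matrix n n 𝕜) - A)⁻¹ * B) default default) / (q i - s j) := by
  split_ifs with hqs <;>
    simp [hqs, loewnerMatrix, transferSlope, transferFunction, resolvent_eq_smul_one_sub_inv,
      mulVec, dotProduct, div_eq_inv_mul]

end LinearSystem

open LinearSystem

theorem stmt_10_general {𝕜 n m p ι κ : Type*} [Field 𝕜] [DecidableEq 𝕜] [Fintype n]
    [DecidableEq n] [Fintype m] [Fintype p] (A : Matrix n n 𝕜) (B : Matrix n m 𝕜)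
    (C : Matrix p n 𝕜) (ℓ : ι → p → 𝕜) (r : κ → m → 𝕜) {q : ι → 𝕜} {s : κ → 𝕜}
    (hq : ∀ i, q i ∈ resolventSet 𝕜 A) (hs : ∀ j, s j ∈ resolventSet 𝕜 A) :
    loewnerMatrix A B C ℓ r q s =
      -(observabilityMatrix A C ℓ q * controllabilityMatrix A B r s) := by
  ext i j
  calc ℓ i ⬝ᵥ (transferSlope A B C (q i) (s j) *ᵥ r j)
      = -(ℓ i ⬝ᵥ ((C * resolvent A (q i) * (resolvent A (s j) * B)) *ᵥ r j)) := by
        rw [transferSlope_eq_neg_mul B C (hq i) (hs j), neg_mulVec, dotProduct_neg]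
    _ = -((ℓ i ᵥ* (C * resolvent A (q i))) ⬝ᵥ ((resolvent A (s j) * B) *ᵥ r j)) := by
        rw [← mulVec_mulVec, dotProduct_mulVec]

/-- The Loewner matrix built from the data, with entries
`(K(qᵢ) − K(s_j))/(qᵢ − s_j)` when `qᵢ ≠ s_j` and `−C(s_jI − A)⁻²B = K'(s_j)`
when `qᵢ = s_j`, equals `−ΥΠ`, where the `i`-th row of `Υ` is `C(qᵢI − A)⁻¹`
and the `j`-th column of `Π` is `(s_jI − A)⁻¹B`. -/
theorem stmt_10 {n ν : ℕ}
    (A : Matrix (Fin n) (Fin n) ℂ) (B : Matrix (Fin n) (Fin 1) ℂ)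
    (C : Matrix (Fin 1) (Fin n) ℂ)
    (q s : Fin ν → ℂ)
    (hq : ∀ i, IsUnit (q i • (1 : Matrix (Fin n) (Fin n) ℂ) - A))
    (hs : ∀ j, IsUnit (s j • (1 : Matrix (Fin n) (Fin n) ℂ) - A))
    (Υ : Matrix (Fin ν) (Fin n) ℂ)
    (hΥ : ∀ i j, Υ i j = (C * (q i • (1 : Matrix (Fin n) (Fin n) ℂ) - A)⁻¹) 0 j)
    (Pm : Matrix (Fin n) (Fin ν) ℂ)
    (hPm : ∀ i j, Pm i j = ((s j • (1 : Matrix (Fin n) (Fin n) ℂ) - A)⁻¹ * B) i 0)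
    (𝕃 : Matrix (Fin ν) (Fin ν) ℂ)
    (h𝕃 : ∀ i j, 𝕃 i j =
      if q i = s j then
        (-(C * ((s j • (1 : Matrix (Fin n) (Fin n) ℂ) - A)⁻¹
            * (s j • (1 : Matrix (Fin n) (Fin n) ℂ) - A)⁻¹) * B)) 0 0
      else
        ((C * (q i • (1 : Matrix (Fin n) (Fin n) ℂ) - A)⁻¹ * B) 0 0
          - (C * (s j • (1 : Matrix (Fin n) (Fin n) ℂ) - A)⁻¹ * B) 0 0)
          / (q i - s j)) :
    𝕃 = -(Υ * Pm) := by
  obtain rfl : Υ = observabilityMatrix A C 1 q :=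
    ext fun i k => (hΥ i k).trans (observabilityMatrix_one_apply A C q i k).symm
  obtain rfl : Pm = controllabilityMatrix A B 1 s :=
    ext fun k j => (hPm k j).trans (controllabilityMatrix_one_apply A B s k j).symm
  obtain rfl : 𝕃 = loewnerMatrix A B C 1 1 q s :=
    ext fun i j => (h𝕃 i j).trans (loewnerMatrix_one_apply A B C q s i j).symm
  exact stmt_10_general A B C 1 1
    (fun i => mem_resolventSet_iff_isUnit_smul_one_sub.mpr (hq i))
    (fun j => mem_resolventSet_iff_isUnit_smul_one_sub.mpr (hs j))
end

section
/- Let A ∈ ℂ^{n×n}, B ∈ ℂ^{n×1}, S ∈ ℂ^{ν×ν}, L ∈ ℂ^{1×ν}, Q ∈ ℂ^{ν×ν} and 𝐑 ∈ ℂ^{ν×n}. Suppose Π ∈ ℂ^{n×ν} satisfies AΠ + BL = ΠS and Υ ∈ ℂ^{ν×n} satisfies QΥ = Υ A + 𝐑. Then the matrix 𝕃 = −ΥΠ satisfies the Sylvester equation 𝕃 S − Q 𝕃 = 𝐑 Π − Υ B L. -/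
open Matrix

section Sylvester

variable {l m n p α : Type*} [Fintype l] [Fintype m] [Fintype n] [NonUnitalRing α]

/-- The Sylvester operator `X ↦ MX − XN` on rectangular matrices. The right and left interpolation
data prescribe its values at `Π` and `Υ`, and the conclusion is its value at `ΥΠ`. -/
def sylvesterOperator (M : Matrix l l α) (N : Matrix m m α) (X : Matrix l m α) : Matrix l m α :=
  M * X - X * N

theorem sylvesterOperator_mul (Q : Matrix l l α) (A : Matrix m m α) (S : Matrix n n α)
    (X : Matrix l m α) (Y : Matrix m n α) :
    sylvesterOperator Q S (X * Y) =
      sylvesterOperator Q A X * Y + X * sylvesterOperator A S Y := by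
  simp only [sylvesterOperator, Matrix.sub_mul, Matrix.mul_sub, Matrix.mul_assoc,
    sub_add_sub_cancel]

theorem stmt_12_general [Fintype p] {A : Matrix m m α} {B : Matrix m p α} {S : Matrix n n α}
    {L : Matrix p n α} {Q : Matrix l l α} {R : Matrix l m α} {Pm : Matrix m n α}
    {Υ : Matrix l m α} (hPm : A * Pm + B * L = Pm * S) (hΥ : Q * Υ = Υ * A + R) :
    -(Υ * Pm) * S - Q * -(Υ * Pm) = R * Pm - Υ * B * L := by
  have right_data : sylvesterOperator A S Pm = -(B * L) := by
    rw [sylvesterOperator, ← hPm, sub_add_cancel_left]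
  have left_data : sylvesterOperator Q A Υ = R := by
    rw [sylvesterOperator, hΥ, add_sub_cancel_left]
  calc
    -(Υ * Pm) * S - Q * -(Υ * Pm) = sylvesterOperator Q S (Υ * Pm) := by
      rw [sylvesterOperator, Matrix.neg_mul, Matrix.mul_neg, neg_sub_neg]
    _ = sylvesterOperator Q A Υ * Pm + Υ * sylvesterOperator A S Pm :=
      sylvesterOperator_mul Q A S Υ Pm
    _ = R * Pm - Υ * B * L := by
      rw [left_data, right_data, Matrix.mul_neg, ← Matrix.mul_assoc, ← sub_eq_add_neg]

end Sylvester

/-- If `AΠ + BL = ΠS` and `QΥ = ΥA + 𝐑`, then `𝕃 = −ΥΠ` satisfies the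
Sylvester equation `𝕃S − Q𝕃 = 𝐑Π − ΥBL`. -/
theorem stmt_12 {n ν : ℕ}
    (A : Matrix (Fin n) (Fin n) ℂ) (B : Matrix (Fin n) (Fin 1) ℂ)
    (S : Matrix (Fin ν) (Fin ν) ℂ) (L : Matrix (Fin 1) (Fin ν) ℂ)
    (Q : Matrix (Fin ν) (Fin ν) ℂ) (R : Matrix (Fin ν) (Fin n) ℂ)
    (Pm : Matrix (Fin n) (Fin ν) ℂ)
    (hPm : A * Pm + B * L = Pm * S)
    (Υ : Matrix (Fin ν) (Fin n) ℂ)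
    (hΥ : Q * Υ = Υ * A + R) :
    (-(Υ * Pm)) * S - Q * (-(Υ * Pm)) = R * Pm - Υ * B * L :=
  stmt_12_general hPm hΥ
end

section
/- Let A ∈ ℂ^{n×n}, B ∈ ℂ^{n×1}, S ∈ ℂ^{ν×ν}, L ∈ ℂ^{1×ν}, Q ∈ ℂ^{ν×ν} and 𝐑 ∈ ℂ^{ν×n}. Suppose Π ∈ ℂ^{n×ν} satisfies AΠ + BL = ΠS and Υ ∈ ℂ^{ν×n} satisfies QΥ = Υ A + 𝐑. Then the matrix σ𝕃 = −Υ A Π satisfies the Sylvester equation σ𝕃 S − Q σ𝕃 = 𝐑 Π S − Q Υ B L. -/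
open Matrix

section Loewner

variable {α m n l r : Type*} [NonUnitalRing α] [Fintype n]

/-- The Loewner matrix `𝕃 = -ΥΠ` of tangential interpolation; `Pm` stands for `Π`. The equations
`QΥ = ΥA + R` and `AΠ + BL = ΠS` defining `Υ` and `Π` are not part of the definition. -/
def loewner (Υ : Matrix l n α) (Pm : Matrix n r α) : Matrix l r α :=
  -(Υ * Pm)

/-- The shifted Loewner matrix `σ𝕃 = -ΥAΠ` of a system with state matrix `A`, for `Υ` and `Π` as
in `loewner`. -/
def shiftedLoewner (Υ : Matrix l n α) (A : Matrix n n α) (Pm : Matrix n r α) : Matrix l r α :=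
  -(Υ * A * Pm)

theorem shiftedLoewner_eq_mul_loewner_add [Fintype l]
    {A : Matrix n n α} {Q : Matrix l l α} {R Υ : Matrix l n α}
    (hΥ : Q * Υ = Υ * A + R) (Pm : Matrix n r α) :
    shiftedLoewner Υ A Pm = Q * loewner Υ Pm + R * Pm :=
  calc -(Υ * A * Pm)
    _ = -((Υ * A + R) * Pm) + R * Pm := by rw [Matrix.add_mul]; abel
    _ = -(Q * Υ * Pm) + R * Pm := by rw [hΥ]
    _ = Q * -(Υ * Pm) + R * Pm := by rw [Matrix.mul_neg, Matrix.mul_assoc]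

theorem shiftedLoewner_eq_loewner_mul_add [Fintype m] [Fintype r]
    {A : Matrix n n α} {B : Matrix n m α} {S : Matrix r r α} {L : Matrix m r α}
    {Pm : Matrix n r α} (hPm : A * Pm + B * L = Pm * S) (Υ : Matrix l n α) :
    shiftedLoewner Υ A Pm = loewner Υ Pm * S + Υ * B * L :=
  calc -(Υ * A * Pm)
    _ = -(Υ * (A * Pm + B * L)) + Υ * B * L := by
      simp only [Matrix.mul_add, Matrix.mul_assoc]; abel
    _ = -(Υ * (Pm * S)) + Υ * B * L := by rw [hPm]
    _ = -(Υ * Pm) * S + Υ * B * L := by rw [Matrix.neg_mul, Matrix.mul_assoc Υ Pm]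

theorem stmt_13_general [Fintype m] [Fintype l] [Fintype r]
    {A : Matrix n n α} {B : Matrix n m α} {S : Matrix r r α} {L : Matrix m r α}
    {Q : Matrix l l α} {R : Matrix l n α} {Pm : Matrix n r α} {Υ : Matrix l n α}
    (hPm : A * Pm + B * L = Pm * S) (hΥ : Q * Υ = Υ * A + R) :
    shiftedLoewner Υ A Pm * S - Q * shiftedLoewner Υ A Pm =
      R * Pm * S - Q * (Υ * B * L) :=
  calc shiftedLoewner Υ A Pm * S - Q * shiftedLoewner Υ A Pm
    _ = (Q * loewner Υ Pm + R * Pm) * S - Q * (loewner Υ Pm * S + Υ * B * L) := by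
      rw [← shiftedLoewner_eq_mul_loewner_add hΥ, ← shiftedLoewner_eq_loewner_mul_add hPm]
    _ = (Q * loewner Υ Pm * S + R * Pm * S) - (Q * loewner Υ Pm * S + Q * (Υ * B * L)) := by
      rw [Matrix.add_mul, Matrix.mul_add, Matrix.mul_assoc Q]
    _ = R * Pm * S - Q * (Υ * B * L) := add_sub_add_left_eq_sub _ _ _

end Loewner

/-- If `AΠ + BL = ΠS` and `QΥ = ΥA + 𝐑`, then `σ𝕃 = −ΥAΠ` satisfies the
Sylvester equation `σ𝕃S − Qσ𝕃 = 𝐑ΠS − QΥBL`. -/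
theorem stmt_13 {n ν : ℕ}
    (A : Matrix (Fin n) (Fin n) ℂ) (B : Matrix (Fin n) (Fin 1) ℂ)
    (S : Matrix (Fin ν) (Fin ν) ℂ) (L : Matrix (Fin 1) (Fin ν) ℂ)
    (Q : Matrix (Fin ν) (Fin ν) ℂ) (R : Matrix (Fin ν) (Fin n) ℂ)
    (Pm : Matrix (Fin n) (Fin ν) ℂ)
    (hPm : A * Pm + B * L = Pm * S)
    (Υ : Matrix (Fin ν) (Fin n) ℂ)
    (hΥ : Q * Υ = Υ * A + R) :
    (-(Υ * A * Pm)) * S - Q * (-(Υ * A * Pm)) = R * Pm * S - Q * (Υ * B * L) :=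
  stmt_13_general hPm hΥ
end

section
/- Let A ∈ ℂ^{n×n}, B ∈ ℂ^{n×1}, C ∈ ℂ^{1×n}, S ∈ ℂ^{ν×ν}, L ∈ ℂ^{1×ν}, and let Π ∈ ℂ^{n×ν} satisfy AΠ + BL = ΠS. Let ℓ ≤ ν, Q_P ∈ ℂ^{ℓ×ℓ}, R_P ∈ ℂ^{ℓ×1}, C_P ∈ ℂ^{1×n} with C_P Π = 0, S_D ∈ ℂ^{(ν−ℓ)×(ν−ℓ)}, R ∈ ℂ^{(ν−ℓ)×1}, and suppose Υ_P ∈ ℂ^{ℓ×n} satisfies Q_P Υ_P = Υ_P A + R_P C_P and Υ_D ∈ ℂ^{(ν−ℓ)×n} satisfies S_D Υ_D = Υ_D A + R C. Let Υ = [Υ_P; Υ_D] ∈ ℂ^{ν×n} (the block rows stacked) and assume ΥΠ is invertible. If G = (ΥΠ)^{-1} Υ B, then every eigenvalue of Q_P is an eigenvalue of S − GL, and moreover Υ_D Π G = Υ_D B. -/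
open Matrix

/-!
Since `ΥΠG = ΥB`, the Sylvester equation gives `ΥΠ(S - GL) = ΥAΠ`, so `S - GL` is the compression
`(ΥΠ)⁻¹ΥAΠ` of `A`. In the upper block row the term `R_P C_P` is annihilated by `Π`, so `W = Υ_P Π`
satisfies `W(S - GL) = Q_P W`. As a block row of an invertible matrix, `W` has a right inverse `V`.
If `N` is an inverse of `z - (S - GL)`, then `(z - Q_P)(WNV) = 1`, and one-sided inverses of square
matrices are two-sided; hence `z` is outside the spectrum of `Q_P` too.
-/

theorem mul_toCols₁_eq_one_of_fromRows_mul_eq_one {α k p d : Type*} [Semiring α] [Fintype k]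
    [DecidableEq p] [DecidableEq d] {M : Matrix p k α} {N : Matrix d k α} {V : Matrix k (p ⊕ d) α}
    (h : fromRows M N * V = 1) : M * V.toCols₁ = 1 := by
  rw [← fromCols_toCols V, fromRows_mul_fromCols, ← fromBlocks_one] at h
  exact (fromBlocks_inj.1 h).1

section Sylvester

variable {α k n p q u : Type*} [Fintype n]

theorem mul_mul_sub_mul_eq_of_sylvester [NonUnitalRing α] [Fintype k] [Fintype u]
    {A : Matrix n n α} {B : Matrix n u α} {S : Matrix k k α} {L : Matrix u k α}
    {Pm : Matrix n k α} {Υ : Matrix p n α} {G : Matrix k u α}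
    (hPm : A * Pm + B * L = Pm * S) (hG : Υ * Pm * G = Υ * B) :
    Υ * Pm * (S - G * L) = Υ * A * Pm :=
  calc Υ * Pm * (S - G * L) = Υ * (Pm * S) - Υ * Pm * G * L := by
        simp only [Matrix.mul_sub, Matrix.mul_assoc]
    _ = Υ * (A * Pm + B * L) - Υ * B * L := by rw [hPm, hG]
    _ = Υ * A * Pm := by simp only [Matrix.mul_add, Matrix.mul_assoc, add_sub_cancel_right]

theorem mul_mul_eq_of_sylvester_of_mul_eq_zero [NonUnitalSemiring α] [Fintype p] [Fintype q]
    {A : Matrix n n α} {Pm : Matrix n k α} {Q : Matrix p p α} {R : Matrix p q α}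
    {C : Matrix q n α} {Υ : Matrix p n α}
    (hΥ : Q * Υ = Υ * A + R * C) (hC : C * Pm = 0) : Υ * A * Pm = Q * (Υ * Pm) := by
  rw [← Matrix.mul_assoc, hΥ, Matrix.add_mul, Matrix.mul_assoc R, hC, Matrix.mul_zero, add_zero]

end Sylvester

section CommRing

variable {K k n p d q u : Type*} [CommRing K] [Fintype n] [Fintype p] [Fintype d] [Fintype q]
  [Fintype u] [DecidableEq p] [DecidableEq d]

theorem spectrum_subset_of_mul_eq_mul_of_mul_eq_one [Fintype k] [DecidableEq k] {X : Matrix k k K}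
    {Y : Matrix p p K} {W : Matrix p k K} {V : Matrix k p K}
    (hW : W * X = Y * W) (hV : W * V = 1) : spectrum K Y ⊆ spectrum K X := by
  intro z
  contrapose!
  simp only [spectrum.notMem_iff]
  intro hX
  obtain ⟨N, hN⟩ := hX.exists_right_inv
  have intertwine : (algebraMap K _ z - Y) * W = W * (algebraMap K _ z - X) := by
    simp only [Algebra.algebraMap_eq_smul_one, Matrix.sub_mul, Matrix.mul_sub, hW, Matrix.smul_mul,
      Matrix.mul_smul, Matrix.one_mul, Matrix.mul_one]
  refine .of_mul_eq_one (W * N * V) ?_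
  calc (algebraMap K _ z - Y) * (W * N * V) = (algebraMap K _ z - Y) * W * N * V := by
        simp only [Matrix.mul_assoc]
    _ = W * ((algebraMap K _ z - X) * N) * V := by rw [intertwine, Matrix.mul_assoc W]
    _ = 1 := by rw [hN, Matrix.mul_one, hV]

theorem stmt_15_general {A : Matrix n n K} {B : Matrix n u K} {S : Matrix (p ⊕ d) (p ⊕ d) K}
    {L : Matrix u (p ⊕ d) K} {Pm : Matrix n (p ⊕ d) K} (hPm : A * Pm + B * L = Pm * S)
    {Qp : Matrix p p K} {Rp : Matrix p q K} {Cp : Matrix q n K} (hCp : Cp * Pm = 0)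
    {Υp : Matrix p n K} (hΥp : Qp * Υp = Υp * A + Rp * Cp) {Υd : Matrix d n K}
    (hinv : IsUnit (fromRows Υp Υd * Pm)) {G : Matrix (p ⊕ d) u K}
    (hG : G = (fromRows Υp Υd * Pm)⁻¹ * (fromRows Υp Υd * B)) :
    spectrum K Qp ⊆ spectrum K (S - G * L) ∧ Υd * Pm * G = Υd * B := by
  have hdet := (isUnit_iff_isUnit_det _).1 hinv
  have hΥG : fromRows Υp Υd * Pm * G = fromRows Υp Υd * B := by
    rw [hG, mul_nonsing_inv_cancel_left _ _ hdet]
  obtain ⟨hpG, hdG⟩ : Υp * Pm * G = Υp * B ∧ Υd * Pm * G = Υd * B := by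
    simpa only [fromRows_mul, fromRows_inj.eq_iff] using hΥG
  have intertwine : Υp * Pm * (S - G * L) = Qp * (Υp * Pm) :=
    (mul_mul_sub_mul_eq_of_sylvester hPm hpG).trans
      (mul_mul_eq_of_sylvester_of_mul_eq_zero hΥp hCp)
  have right_inv : Υp * Pm * (fromRows Υp Υd * Pm)⁻¹.toCols₁ = 1 :=
    mul_toCols₁_eq_one_of_fromRows_mul_eq_one (N := Υd * Pm) <| by
      rw [← fromRows_mul, mul_nonsing_inv _ hdet]
  exact ⟨spectrum_subset_of_mul_eq_mul_of_mul_eq_one intertwine right_inv, hdG⟩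

end CommRing

/-- Simultaneous pole placement and first-order moment matching via the
generalized Loewner matrix: with `Υ = [Υ_P; Υ_D]` stacked (indices
`Fin ℓ ⊕ Fin m`, `ν = ℓ + m`), `ΥΠ` invertible and `G = (ΥΠ)⁻¹ΥB`,
every eigenvalue of `Q_P` is an eigenvalue of `S − GL` and `Υ_D Π G = Υ_D B`. -/
theorem stmt_15 {n ℓ m : ℕ}
    (A : Matrix (Fin n) (Fin n) ℂ) (B : Matrix (Fin n) (Fin 1) ℂ)
    (C : Matrix (Fin 1) (Fin n) ℂ)
    (S : Matrix (Fin ℓ ⊕ Fin m) (Fin ℓ ⊕ Fin m) ℂ)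
    (L : Matrix (Fin 1) (Fin ℓ ⊕ Fin m) ℂ)
    (Pm : Matrix (Fin n) (Fin ℓ ⊕ Fin m) ℂ)
    (hPm : A * Pm + B * L = Pm * S)
    (Qp : Matrix (Fin ℓ) (Fin ℓ) ℂ) (Rp : Matrix (Fin ℓ) (Fin 1) ℂ)
    (Cp : Matrix (Fin 1) (Fin n) ℂ) (hCp : Cp * Pm = 0)
    (SD : Matrix (Fin m) (Fin m) ℂ) (R : Matrix (Fin m) (Fin 1) ℂ)
    (Υp : Matrix (Fin ℓ) (Fin n) ℂ)
    (hΥp : Qp * Υp = Υp * A + Rp * Cp)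
    (Υd : Matrix (Fin m) (Fin n) ℂ)
    (hΥd : SD * Υd = Υd * A + R * C)
    (hinv : IsUnit (Matrix.fromRows Υp Υd * Pm))
    (G : Matrix (Fin ℓ ⊕ Fin m) (Fin 1) ℂ)
    (hG : G = (Matrix.fromRows Υp Υd * Pm)⁻¹ * (Matrix.fromRows Υp Υd * B)) :
    spectrum ℂ Qp ⊆ spectrum ℂ (S - G * L) ∧ Υd * Pm * G = Υd * B :=
  stmt_15_general hPm hCp hΥp hinv hG
end

section
/- Let A ∈ ℂ^{n×n}, B ∈ ℂ^{n×1}, C ∈ ℂ^{1×n}, let s_1, …, s_ν ∈ ℂ, none of which is an eigenvalue of A, let S = diag(s_1, …, s_ν), L = [1 ⋯ 1] ∈ ℂ^{1×ν}, and let Π ∈ ℂ^{n×ν} be the matrix whose j-th column is (s_j I − A)^{-1}B (so that AΠ + BL = ΠS). Then for every G ∈ ℂ^{ν×1} and every index j such that s_j I − S + GL is invertible, CΠ(s_j I − S + GL)^{-1} G = C(s_j I − A)^{-1} B; that is, the reduced model Σ_G interpolates the original transfer function: K_G(s_j) = K(s_j). -/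
open Matrix

/-!
Both transfer functions are evaluated by solving a linear system: if `(σI - A)X = Bu` then
`K(σ)u = CX`. Let `v` be an eigenvector of `S` for `σ`. The Sylvester equation `AΠ + BL = ΠS` says
that `X = Πv` solves the system of the full model with input `Lv`, while `X = v` solves that of
the reduced model with the same input, so both transfer functions send `Lv` to `CΠv`. For
`S = diag(s₁,…,s_ν)` and `v = e_j` the input `Lv` is the scalar `1`.
-/

theorem eq_of_mulVec_one_eq {R m p : Type*} [NonAssocSemiring R] [Fintype m] [Unique m]
    {M N : Matrix p m R} (h : M *ᵥ 1 = N *ᵥ 1) : M = N := by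
  ext i k
  simpa [mulVec, dotProduct, Unique.eq_default k] using congrFun h i

section MomentMatching

variable {R n m p r : Type*} [CommRing R] [Fintype n] [DecidableEq n]

/-- The transfer function `σ ↦ C(σI - A)⁻¹B` of the linear system `ẋ = Ax + Bu`, `y = Cx`. It is
only meaningful where `σI - A` is invertible, the matrix inverse being `0` elsewhere. -/
noncomputable def transferFunction (A : Matrix n n R) (B : Matrix n m R) (C : Matrix p n R)
    (σ : R) : Matrix p m R :=
  C * (σ • (1 : Matrix n n R) - A)⁻¹ * B

variable [Fintype m]

theorem transferFunction_mulVec_eq {A : Matrix n n R} {B : Matrix n m R} (C : Matrix p n R)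
    {σ : R} (hA : IsUnit (σ • (1 : Matrix n n R) - A)) {x : n → R} {u : m → R}
    (hx : (σ • (1 : Matrix n n R) - A) *ᵥ x = B *ᵥ u) :
    transferFunction A B C σ *ᵥ u = C *ᵥ x := by
  have hdet := (isUnit_iff_isUnit_det _).1 hA
  rw [transferFunction, ← mulVec_mulVec, ← hx, mulVec_mulVec,
    nonsing_inv_mul_cancel_right _ _ hdet]

theorem mul_add_mul_eq_mul_diagonal [Fintype r] [DecidableEq r] {A : Matrix n n R}
    {B : Matrix n m R} {L : Matrix m r R} {P : Matrix n r R} {s : r → R}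
    (hA : ∀ j, IsUnit (s j • (1 : Matrix n n R) - A))
    (hP : ∀ j, P.col j = ((s j • (1 : Matrix n n R) - A)⁻¹ * B) *ᵥ L.col j) :
    A * P + B * L = P * diagonal s := by
  refine ext_of_mulVec_single fun j ↦ ?_
  have hcol : (s j • (1 : Matrix n n R) - A) *ᵥ P.col j = B *ᵥ L.col j := by
    have hdet := (isUnit_iff_isUnit_det _).1 (hA j)
    rw [hP j, mulVec_mulVec, mul_nonsing_inv_cancel_left _ _ hdet]
  calc (A * P + B * L) *ᵥ Pi.single j 1
      = A *ᵥ P.col j + B *ᵥ L.col j := by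
        rw [add_mulVec, ← mulVec_mulVec, ← mulVec_mulVec, mulVec_single_one, mulVec_single_one]
    _ = s j • P.col j := by
        rw [← hcol, sub_mulVec, smul_mulVec, one_mulVec, add_sub_cancel]
    _ = (P * diagonal s) *ᵥ Pi.single j 1 := by
        rw [← mulVec_mulVec, diagonal_mulVec_single, mul_one, mulVec_single, op_smul_eq_smul]

theorem stmt_17_general [Fintype r] [DecidableEq r] {A : Matrix n n R} {B : Matrix n m R}
    (C : Matrix p n R) {S : Matrix r r R} {L : Matrix m r R} {P : Matrix n r R}
    (hP : A * P + B * L = P * S) (G : Matrix r m R) {σ : R} {v : r → R} (hv : S *ᵥ v = σ • v)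
    (hA : IsUnit (σ • (1 : Matrix n n R) - A))
    (hG : IsUnit (σ • (1 : Matrix r r R) - (S - G * L))) :
    transferFunction (S - G * L) G (C * P) σ *ᵥ (L *ᵥ v) =
      transferFunction A B C σ *ᵥ (L *ᵥ v) := by
  have hreduced : (σ • (1 : Matrix r r R) - (S - G * L)) *ᵥ v = G *ᵥ (L *ᵥ v) := by
    simp only [sub_mulVec, smul_mulVec, one_mulVec, hv, mulVec_mulVec, sub_sub_cancel]
  have hfull : (σ • (1 : Matrix n n R) - A) *ᵥ (P *ᵥ v) = B *ᵥ (L *ᵥ v) := by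
    have hPv : P *ᵥ (σ • v) = A *ᵥ (P *ᵥ v) + B *ᵥ (L *ᵥ v) := by
      simp only [← hv, mulVec_mulVec, ← hP, add_mulVec]
    rw [sub_mulVec, smul_mulVec, one_mulVec, ← mulVec_smul, hPv, add_sub_cancel_left]
  rw [transferFunction_mulVec_eq _ hG hreduced, transferFunction_mulVec_eq _ hA hfull,
    mulVec_mulVec]

end MomentMatching

/-- Zero-order moment matching of the parametrized family `Σ_G`: with
`S = diag(s₁,…,s_ν)`, `L = [1 ⋯ 1]` and `Π` whose `j`-th column is
`(s_jI − A)⁻¹B`, for every `G` and every `j` with `s_jI − S + GL` invertible,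
`CΠ(s_jI − S + GL)⁻¹G = C(s_jI − A)⁻¹B`, i.e. `K_G(s_j) = K(s_j)`. -/
theorem stmt_17 {n ν : ℕ}
    (A : Matrix (Fin n) (Fin n) ℂ) (B : Matrix (Fin n) (Fin 1) ℂ)
    (C : Matrix (Fin 1) (Fin n) ℂ)
    (s : Fin ν → ℂ)
    (hA : ∀ j, IsUnit (s j • (1 : Matrix (Fin n) (Fin n) ℂ) - A))
    (Pm : Matrix (Fin n) (Fin ν) ℂ)
    (hPm : ∀ i j, Pm i j = ((s j • (1 : Matrix (Fin n) (Fin n) ℂ) - A)⁻¹ * B) i 0)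
    (G : Matrix (Fin ν) (Fin 1) ℂ) (j : Fin ν)
    (hj : IsUnit (s j • (1 : Matrix (Fin ν) (Fin ν) ℂ) - Matrix.diagonal s
        + G * (Matrix.of fun (_ : Fin 1) (_ : Fin ν) => (1 : ℂ)))) :
    C * Pm * (s j • (1 : Matrix (Fin ν) (Fin ν) ℂ) - Matrix.diagonal s
        + G * (Matrix.of fun (_ : Fin 1) (_ : Fin ν) => (1 : ℂ)))⁻¹ * G
      = C * (s j • (1 : Matrix (Fin n) (Fin n) ℂ) - A)⁻¹ * B := by
  set L : Matrix (Fin 1) (Fin ν) ℂ := Matrix.of fun _ _ => 1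
  have hsylvester : A * Pm + B * L = Pm * diagonal s := by
    refine mul_add_mul_eq_mul_diagonal hA fun k ↦ funext fun i ↦ ?_
    simpa [L, mulVec, dotProduct] using hPm i k
  have heigen : diagonal s *ᵥ Pi.single j 1 = s j • Pi.single j 1 := by
    rw [diagonal_mulVec_single, ← Pi.single_smul, smul_eq_mul]
  have hinput : L *ᵥ Pi.single j 1 = 1 := mulVec_single_one L j
  rw [sub_add] at hj ⊢
  exact eq_of_mulVec_one_eq (hinput ▸ stmt_17_general C hsylvester G heigen (hA j) hj)
end

section
/- Let A ∈ ℂ^{n×n}, B ∈ ℂ^{n×1}, C ∈ ℂ^{1×n}, let s_1, …, s_ν ∈ ℂ be pairwise distinct and not eigenvalues of A, let S = diag(s_1, …, s_ν), L = [1 ⋯ 1] ∈ ℂ^{1×ν}, and let Π ∈ ℂ^{n×ν} have j-th column (s_j I − A)^{-1}B. Let λ_1, …, λ_ℓ ∈ ℂ (ℓ ≤ ν) be distinct from all s_i and not eigenvalues of A, let C_P ∈ ℂ^{1×n} satisfy C_P Π = 0, let Υ_P ∈ ℂ^{ℓ×n} have k-th row C_P(λ_k I − A)^{-1}, let Υ_D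 ∈ ℂ^{(ν−ℓ)×n} have rows C(s_i I − A)^{-1} for i = ℓ+1, …, ν, and let Υ = [Υ_P; Υ_D]. If ΥΠ is invertible and G = (g_1, …, g_ν)^T = (ΥΠ)^{-1} Υ B, then G satisfies the linear system: 1 + Σ_{i=1}^{ν} g_i/(λ_k − s_i) = 0 for every k = 1:ℓ, and Υ_D Π G = Υ_D B. -/
open Matrix

/-!
With `Υ` the matrix of rows `c (λₖ I − A)⁻¹` and `Π` the matrix of columns `(sⱼ I − A)⁻¹ b`, the
resolvent identity gives the Sylvester equation `(λₖ − sⱼ) (Υ Π)ₖⱼ = (c Π)ⱼ − (Υ b)ₖ`. When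
`c Π = 0`, the `k`-th row of `Υ Π` is therefore `-(Υ b)ₖ` times the Cauchy row `1 / (λₖ − sⱼ)`, so
the `k`-th equation of `Υ Π g = Υ b` is `-(Υ b)ₖ ∑ⱼ gⱼ / (λₖ − sⱼ) = (Υ b)ₖ`. Invertibility forbids
a zero row, hence `(Υ b)ₖ ≠ 0` and can be cancelled.
-/

section CommRing

variable {R n ι κ : Type*} [CommRing R] [Fintype n] [DecidableEq n]

/-- The generalized controllability matrix `Π` of the pair `(A, b)` at the points `s`: its `j`-th
column is `(sⱼ I − A)⁻¹ b`, which is `0` by convention when `sⱼ I − A` is singular. -/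
noncomputable def generalizedControllability (A : Matrix n n R) (b : n → R) (s : ι → R) :
    Matrix n ι R :=
  of fun i j => ((s j • (1 : Matrix n n R) - A)⁻¹ *ᵥ b) i

/-- The generalized observability matrix `Υ` of the pair `(A, c)` at the points `z`: its `k`-th
row is `c (zₖ I − A)⁻¹`, which is `0` by convention when `zₖ I − A` is singular. -/
noncomputable def generalizedObservability (A : Matrix n n R) (c : n → R) (z : κ → R) :
    Matrix κ n R :=
  of fun k => c ᵥ* (z k • (1 : Matrix n n R) - A)⁻¹

theorem sub_smul_resolvent_mul_resolvent (A : Matrix n n R) {z w : R}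
    (h : IsUnit (z • (1 : Matrix n n R) - A) ↔ IsUnit (w • (1 : Matrix n n R) - A)) :
    (z - w) • ((z • (1 : Matrix n n R) - A)⁻¹ * (w • (1 : Matrix n n R) - A)⁻¹) =
      (w • (1 : Matrix n n R) - A)⁻¹ - (z • (1 : Matrix n n R) - A)⁻¹ := by
  rw [← neg_sub (z • (1 : Matrix n n R) - A)⁻¹, Matrix.inv_sub_inv h, sub_sub_sub_cancel_right,
    ← sub_smul, Matrix.mul_smul, mul_one, Matrix.smul_mul, ← neg_smul, neg_sub]

theorem sub_mul_observability_mul_controllability_apply (A : Matrix n n R) (b c : n → R)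
    {z : κ → R} {s : ι → R} {k : κ} {j : ι}
    (h : IsUnit (z k • (1 : Matrix n n R) - A) ↔ IsUnit (s j • (1 : Matrix n n R) - A)) :
    (z k - s j) * (generalizedObservability A c z * generalizedControllability A b s) k j =
      (c ᵥ* generalizedControllability A b s) j - (generalizedObservability A c z *ᵥ b) k := by
  set X := z k • (1 : Matrix n n R) - A
  set Y := s j • (1 : Matrix n n R) - A
  calc (z k - s j) * (c ᵥ* X⁻¹ ⬝ᵥ Y⁻¹ *ᵥ b)
      = c ⬝ᵥ ((z k - s j) • (X⁻¹ * Y⁻¹)) *ᵥ b := by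
        rw [← dotProduct_mulVec, mulVec_mulVec, smul_mulVec, dotProduct_smul, smul_eq_mul]
    _ = c ⬝ᵥ (Y⁻¹ - X⁻¹) *ᵥ b := by rw [sub_smul_resolvent_mul_resolvent A h]
    _ = c ⬝ᵥ Y⁻¹ *ᵥ b - c ᵥ* X⁻¹ ⬝ᵥ b := by
        rw [sub_mulVec, dotProduct_sub, dotProduct_mulVec c X⁻¹]

end CommRing

section Field

variable {K n ι κ : Type*} [Field K] [Fintype n] [DecidableEq n]
  {A : Matrix n n K} {b c : n → K} {z : κ → K} {s : ι → K} {k : κ}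

theorem observability_mul_controllability_apply_of_vecMul_eq_zero
    (hc : c ᵥ* generalizedControllability A b s = 0) {j : ι} (hzs : z k ≠ s j)
    (hz : IsUnit (z k • (1 : Matrix n n K) - A)) (hs : IsUnit (s j • (1 : Matrix n n K) - A)) :
    (generalizedObservability A c z * generalizedControllability A b s) k j =
      -(generalizedObservability A c z *ᵥ b) k / (z k - s j) := by
  rw [eq_div_iff (sub_ne_zero.2 hzs), mul_comm,
    sub_mul_observability_mul_controllability_apply A b c (iff_of_true hz hs), hc, Pi.zero_apply,
    zero_sub]

theorem one_add_sum_div_sub_eq_zero_of_mulVec_eq [Fintype ι]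
    (hc : c ᵥ* generalizedControllability A b s = 0) (hzs : ∀ j, z k ≠ s j)
    (hz : IsUnit (z k • (1 : Matrix n n K) - A))
    (hs : ∀ j, IsUnit (s j • (1 : Matrix n n K) - A))
    (hrow : (generalizedObservability A c z * generalizedControllability A b s).row k ≠ 0)
    {g : ι → K}
    (hg : ((generalizedObservability A c z * generalizedControllability A b s) *ᵥ g) k =
      (generalizedObservability A c z *ᵥ b) k) :
    1 + ∑ j, g j / (z k - s j) = 0 := by
  set M := generalizedObservability A c z * generalizedControllability A b s
  set w := (generalizedObservability A c z *ᵥ b) k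
  have hM (j : ι) : M k j = -w / (z k - s j) :=
    observability_mul_controllability_apply_of_vecMul_eq_zero hc (hzs j) hz (hs j)
  have hw : w ≠ 0 := fun hw => hrow <| funext fun j => by simp [hM, hw]
  have hsum : -w * ∑ j, g j / (z k - s j) = w :=
    calc -w * ∑ j, g j / (z k - s j) = ∑ j, M k j * g j := by
          rw [Finset.mul_sum]
          exact Finset.sum_congr rfl fun j _ => by rw [hM, div_mul_eq_mul_div, mul_div_assoc]
      _ = w := hg
  exact mul_left_cancel₀ hw (by linear_combination -hsum)

end Field

theorem stmt_18_general {K n p q : Type*} [Field K] [Fintype n] [DecidableEq n]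
    [Fintype p] [DecidableEq p] [Fintype q] [DecidableEq q]
    (A : Matrix n n K) (b c : n → K)
    (s : p ⊕ q → K) (hsA : ∀ i, IsUnit (s i • (1 : Matrix n n K) - A))
    (lam : p → K) (hlams : ∀ k i, lam k ≠ s i)
    (hlamA : ∀ k, IsUnit (lam k • (1 : Matrix n n K) - A))
    (hc : c ᵥ* generalizedControllability A b s = 0) (D : Matrix q n K)
    (hinv : IsUnit
      (fromRows (generalizedObservability A c lam) D * generalizedControllability A b s))
    (g : p ⊕ q → K)
    (hg : g = (fromRows (generalizedObservability A c lam) D *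
        generalizedControllability A b s)⁻¹ *ᵥ
      (fromRows (generalizedObservability A c lam) D *ᵥ b)) :
    (∀ k, 1 + ∑ i, g i / (lam k - s i) = 0) ∧
      (D * generalizedControllability A b s) *ᵥ g = D *ᵥ b := by
  set Υ := generalizedObservability A c lam
  set P := generalizedControllability A b s
  have hsolve : (fromRows Υ D * P) *ᵥ g = fromRows Υ D *ᵥ b := by
    rw [hg, mulVec_mulVec, mul_nonsing_inv _ ((isUnit_iff_isUnit_det _).1 hinv), one_mulVec]
  refine ⟨fun k => ?_, funext fun i => ?_⟩
  · have hrow : (fromRows Υ D * P).row (Sum.inl k) ≠ 0 :=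
      (linearIndependent_rows_of_isUnit hinv).ne_zero _
    exact one_add_sum_div_sub_eq_zero_of_mulVec_eq hc (hlams k) (hlamA k) hsA hrow
      (congrFun hsolve (Sum.inl k))
  · exact congrFun hsolve (Sum.inr i)

/-- The explicit Loewner-based parameter `G = (ΥΠ)⁻¹ΥB` satisfies the linear
constraint system: the pole-placement equations `1 + ∑ᵢ gᵢ/(λ_k − sᵢ) = 0`
for `k = 1:ℓ`, and the derivative moment matching constraint `Υ_D Π G = Υ_D B`.
Here the interpolation points are indexed by `Fin ℓ ⊕ Fin m` (`ν = ℓ + m`),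
`Υ_P` has `k`-th row `C_P(λ_kI − A)⁻¹`, `Υ_D` has rows `C(sᵢI − A)⁻¹` for the
last `m` points, and `Π` has `j`-th column `(s_jI − A)⁻¹B`. -/
theorem stmt_18 {n ℓ m : ℕ}
    (A : Matrix (Fin n) (Fin n) ℂ) (B : Matrix (Fin n) (Fin 1) ℂ)
    (C : Matrix (Fin 1) (Fin n) ℂ)
    (s : Fin ℓ ⊕ Fin m → ℂ) (hdist : Function.Injective s)
    (hsA : ∀ i, IsUnit (s i • (1 : Matrix (Fin n) (Fin n) ℂ) - A))
    (lam : Fin ℓ → ℂ)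
    (hlams : ∀ k i, lam k ≠ s i)
    (hlamA : ∀ k, IsUnit (lam k • (1 : Matrix (Fin n) (Fin n) ℂ) - A))
    (Pm : Matrix (Fin n) (Fin ℓ ⊕ Fin m) ℂ)
    (hPm : ∀ i j, Pm i j = ((s j • (1 : Matrix (Fin n) (Fin n) ℂ) - A)⁻¹ * B) i 0)
    (Cp : Matrix (Fin 1) (Fin n) ℂ) (hCp : Cp * Pm = 0)
    (Υp : Matrix (Fin ℓ) (Fin n) ℂ)
    (hΥp : ∀ k j, Υp k j = (Cp * (lam k • (1 : Matrix (Fin n) (Fin n) ℂ) - A)⁻¹) 0 j)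
    (Υd : Matrix (Fin m) (Fin n) ℂ)
    (hΥd : ∀ i j, Υd i j
        = (C * (s (Sum.inr i) • (1 : Matrix (Fin n) (Fin n) ℂ) - A)⁻¹) 0 j)
    (hinv : IsUnit (Matrix.fromRows Υp Υd * Pm))
    (G : Matrix (Fin ℓ ⊕ Fin m) (Fin 1) ℂ)
    (hG : G = (Matrix.fromRows Υp Υd * Pm)⁻¹ * (Matrix.fromRows Υp Υd * B)) :
    (∀ k : Fin ℓ, 1 + ∑ i, G i 0 / (lam k - s i) = 0)
    ∧ Υd * Pm * G = Υd * B := by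
  obtain rfl : Pm = generalizedControllability A (B.col 0) s := Matrix.ext hPm
  obtain rfl : Υp = generalizedObservability A (Cp 0) lam := Matrix.ext hΥp
  exact (stmt_18_general A (B.col 0) (Cp 0) s hsA lam hlams hlamA (congrFun hCp 0) Υd hinv
    (G.col 0) (congrArg (col · 0) hG)).imp_right fun hD =>
      Matrix.ext fun i j => Subsingleton.elim 0 j ▸ congrFun hD i
end
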